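/- arXiv:1101.1869 — 2 statements merged into one kernel-verified Lean document; each statement's English description precedes it below -/
import Mathlib

section
/- Let c > 0 and α₀ ≥ 0. Then there exist S ∈ (0,10] and A > 0, depending only on c and α₀, with the following property: for every S₀ ≥ S, every continuous function α : [−S₀,0) → [0,∞) and every nondecreasing function β : [−S₀,0) → [0,∞) satisfying α(s) + β(s) ≤ c[ α₀ + ∫_{−S₀}^{s} (α(τ) + α(τ)³) dτ ] for all s ∈ [−S₀,0), one has sup_{−S ≤ s < 0} α(s) + sup_{−S ≤ s < 0} β(s) ≤ A whenever S₀ = S (i.e., on the interval [−S,0) the quantities α and β are bounded by A). -/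
open MeasureTheory Metric Set Filter
open scoped ENNReal NNReal Topology

noncomputable section

/-!
The proof is a continuity (bootstrap) argument. Put `M = c (α₀ + 1)` and choose `S` so small that
`S (M + M³) ≤ 1/2`. As long as `α ≤ M`, the integral is at most `1/2`
(`integral_add_cube_le`), so the hypothesis yields `α + β ≤ c (α₀ + 1/2) < M`. Hence there is no
first time at which `α` reaches `M`, and the bound `α + β ≤ M` persists on all of `[-S, 0)`.
-/

/-- The bound on `α` is only needed on the open interval, so it can be applied up to the first
time at which `α` reaches `M`. -/
lemma integral_add_cube_le {α : ℝ → ℝ} {S M t : ℝ} (hM : 0 ≤ M) (hSt : -S ≤ t) (ht : t ≤ 0)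
    (hα : ∀ τ ∈ Ioo (-S) t, 0 ≤ α τ ∧ α τ ≤ M) :
    ∫ τ in Ioc (-S) t, (α τ + α τ ^ 3) ≤ S * (M + M ^ 3) := by
  rw [integral_Ioc_eq_integral_Ioo]
  have h : ‖∫ τ in Ioo (-S) t, (α τ + α τ ^ 3)‖ ≤ (M + M ^ 3) * volume.real (Ioo (-S) t) := by
    refine norm_setIntegral_le_of_norm_le_const (by simp) fun τ hτ => ?_
    obtain ⟨h0, h1⟩ := hα τ hτ
    rw [Real.norm_of_nonneg (by positivity)]
    gcongr
  rw [Real.volume_real_Ioo_of_le hSt] at h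
  calc _ ≤ _ := Real.le_norm_self _
    _ ≤ _ := h
    _ ≤ (M + M ^ 3) * S := by gcongr; linarith
    _ = _ := mul_comm _ _

/-- Grönwall-type absorption lemma. Given `c > 0` and an initial size
`α₀ ≥ 0`, there are `S ∈ (0,10]` and `A > 0`, depending only on `c` and `α₀`, such that
any continuous `α : [−S,0) → [0,∞)` and nondecreasing `β : [−S,0) → [0,∞)` satisfying
`α(s) + β(s) ≤ c[α₀ + ∫_{−S}^{s}(α + α³)]` on `[−S,0)` are bounded by `A` there. -/
theorem gronwall_absorption_lemma (c α₀ : ℝ) (hc : 0 < c) (hα₀ : 0 ≤ α₀) :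
    ∃ S A : ℝ, 0 < S ∧ S ≤ 10 ∧ 0 < A ∧
      ∀ α β : ℝ → ℝ,
        ContinuousOn α (Set.Ico (-S) 0) →
        (∀ s ∈ Set.Ico (-S) (0:ℝ), 0 ≤ α s) →
        MonotoneOn β (Set.Ico (-S) 0) →
        (∀ s ∈ Set.Ico (-S) (0:ℝ), 0 ≤ β s) →
        (∀ s ∈ Set.Ico (-S) (0:ℝ),
          α s + β s ≤ c * (α₀ + ∫ τ in Set.Ioc (-S) s, (α τ + α τ ^ 3))) →
        ∀ s ∈ Set.Ico (-S) (0:ℝ), α s ≤ A ∧ β s ≤ A := by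
  obtain ⟨M, hM⟩ : ∃ M, M = c * (α₀ + 1) := ⟨_, rfl⟩
  have hM0 : 0 < M := by rw [hM]; positivity
  have hP : 0 < M + M ^ 3 := by positivity
  obtain ⟨S, hS⟩ : ∃ S, S = min 10 (1 / 2 / (M + M ^ 3)) := ⟨_, rfl⟩
  have hS0 : 0 < S := by rw [hS]; positivity
  have hSM : S * (M + M ^ 3) ≤ 1 / 2 := by
    rw [← le_div_iff₀ hP, hS]; exact min_le_right _ _
  refine ⟨S, M, hS0, hS ▸ min_le_left _ _, hM0, fun α β hcont hα _ hβ hineq => ?_⟩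
  have improve : ∀ t ∈ Ico (-S) (0:ℝ), (∀ τ ∈ Ioo (-S) t, α τ ≤ M) → α t + β t < M := by
    intro t ht h
    have hI := integral_add_cube_le hM0.le ht.1 ht.2.le
      fun τ hτ => ⟨hα τ ⟨hτ.1.le, hτ.2.trans ht.2⟩, h τ hτ⟩
    calc _ ≤ _ := hineq t ht
      _ ≤ c * (α₀ + 1 / 2) := by gcongr; exact hI.trans hSM
      _ < M := by rw [hM]; gcongr; norm_num
  have hlt : ∀ s ∈ Ico (-S) (0:ℝ), α s < M := by
    intro s hs
    by_contra! hMs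
    have hsub : Icc (-S) s ⊆ Ico (-S) 0 := Icc_subset_Ico_right hs.2
    have hK : IsCompact (Icc (-S) s ∩ α ⁻¹' Ici M) :=
      isCompact_Icc.of_isClosed_subset
        ((hcont.mono hsub).preimage_isClosed_of_isClosed isClosed_Icc isClosed_Ici)
        inter_subset_left
    -- `t` is the first time at which `α` reaches `M`.
    obtain ⟨t, ⟨htI, htM⟩, hmin⟩ := hK.exists_isLeast ⟨s, right_mem_Icc.2 hs.1, hMs⟩
    have := improve t (hsub htI) fun τ hτ => by
      by_contra! h
      exact hτ.2.not_ge (hmin ⟨⟨hτ.1.le, hτ.2.le.trans htI.2⟩, h.le⟩)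
    have := hβ t (hsub htI)
    have : M ≤ α t := htM
    linarith
  intro s hs
  have := improve s hs fun τ hτ => (hlt τ ⟨hτ.1.le, hτ.2.trans hs.2⟩).le
  exact ⟨(hlt s hs).le, by linarith [hα s hs]⟩
end
end

section
/- There is a universal constant c > 0 with the following property: for every S ∈ (0,10], every s ∈ (−S,0), and every smooth vector field u : ℝ³×(−S,0) → ℝ³ for which the quantities below are finite, one has sup_{x ∈ ℝ³} ∫_{−S}^{s}∫_{B(x,1)} |u|³ dy dτ ≤ c ( ∫_{−S}^{s} α(τ)³ dτ )^{1/4} ( β(s) + ∫_{−S}^{s} α(τ) dτ )^{3/4}, where α(τ) = sup_{x ∈ ℝ³} ∫_{B(x,1)} |u(y,τ)|² dy and β(s) = sup_{x ∈ ℝ³} ∫_{−S}^{s}∫_{B(x,1)} |∇u|² dy dτ. -/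
/-!
On a single time slice, `L³` interpolates between `L²` and `L⁶` (`slice_inequality`):
`∫_{B(x,1)} |f|³ ≤ (∫_{B(x,1)} |f|²)^{3/4} (∫_{B(x,1)} |f|⁶)^{1/4}`. The `L⁶` norm is controlled by
the `H¹` norm on `B(x,2)`: multiply `f` by a cutoff equal to `1` on `B(x,1)` and supported in
`B(x,2)`, and apply the Gagliardo–Nirenberg–Sobolev inequality (`local_sobolev`).
Hölder's inequality in time with exponents `4` and `4/3` then gives, for each fixed `x`,
`∫∫_{B(x,1)} |u|³ ≤ C (∫ a³)^{1/4} (∫ b)^{3/4}`, where `a(τ) = ∫_{B(x,1)} |u|²` and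
`b(τ) = ∫_{B(x,2)} (|∇u|² + |u|²)`. Finally `a ≤ α`, and covering `B(x,2)` by `N` unit balls yields
`∫ b ≤ N (β + ∫ α)`. Applying Hölder to `a` and `b`, whose centre is fixed, only requires
measurability of integrals over a fixed ball, and not of the supremum `α`.
-/

open MeasureTheory Metric Set Filter
open scoped ENNReal NNReal Topology

noncomputable section

/-- Three-dimensional Euclidean space. -/
abbrev E3 := EuclideanSpace ℝ (Fin 3)

/-- `α(τ) = sup_x ∫_{B(x,1)} |u(y,τ)|² dy`, the squared uniformly-local `L²` norm. -/
def alphaUnif (u : E3 → ℝ → E3) (τ : ℝ) : ℝ≥0∞ :=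
  ⨆ x : E3, ∫⁻ y in ball x 1, (‖u y τ‖₊ : ℝ≥0∞) ^ 2

/-- `β(s) = sup_x ∫_{−S}^{s}∫_{B(x,1)} |∇u|² dy dτ` (classical spatial gradient). -/
def betaUnif (u : E3 → ℝ → E3) (S s : ℝ) : ℝ≥0∞ :=
  ⨆ x : E3, ∫⁻ τ in Set.Ioc (-S) s, ∫⁻ y in ball x 1,
    ∑ j : Fin 3, (‖fderiv ℝ (fun z => u z τ) y (EuclideanSpace.single j 1)‖₊ : ℝ≥0∞) ^ 2

/-- The operator norm is bounded by the sum of the norms of the columns. -/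
lemma norm_sq_le_columns (A : E3 →L[ℝ] E3) :
    ‖A‖ ^ 2 ≤ 3 * ∑ j : Fin 3, ‖A (EuclideanSpace.single j 1)‖ ^ 2 := by
  have h1 : ‖A‖ ≤ ∑ j : Fin 3, ‖A (EuclideanSpace.single j 1)‖ := by
    refine A.opNorm_le_bound (by positivity) fun v => ?_
    have hv : v = ∑ j : Fin 3, v j • EuclideanSpace.single j (1 : ℝ) := by
      ext i
      simp [Finset.sum_apply, Pi.single_apply]
    calc ‖A v‖ = ‖∑ j : Fin 3, v j • A (EuclideanSpace.single j (1 : ℝ))‖ := by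
          conv_lhs => rw [hv]
          simp [map_sum]
      _ ≤ ∑ j : Fin 3, ‖v j • A (EuclideanSpace.single j (1 : ℝ))‖ := norm_sum_le _ _
      _ ≤ ∑ j : Fin 3, ‖A (EuclideanSpace.single j (1 : ℝ))‖ * ‖v‖ := by
          refine Finset.sum_le_sum fun j _ => ?_
          rw [norm_smul, mul_comm]
          gcongr
          exact PiLp.norm_apply_le v j
      _ = _ := by rw [Finset.sum_mul]
  calc ‖A‖ ^ 2 ≤ (∑ j : Fin 3, ‖A (EuclideanSpace.single j 1)‖) ^ 2 := by gcongr
    _ ≤ _ := by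
      simpa using sq_sum_le_card_mul_sum_sq (s := (Finset.univ : Finset (Fin 3)))
        (f := fun j => ‖A (EuclideanSpace.single j 1)‖)

/-- The Sobolev inequality `‖v‖₆ ≤ C ‖∇v‖₂` on `ℝ³`, raised to the sixth power. -/
lemma sobolev_six :
    ∃ C : ℝ≥0, ∀ v : E3 → E3, ContDiff ℝ 1 v → HasCompactSupport v →
      ∫⁻ y, ‖v y‖ₑ ^ 6 ≤ C * (∫⁻ y, ‖fderiv ℝ v y‖ₑ ^ 2) ^ 3 := by
  refine ⟨(SNormLESNormFDerivOfEqConst E3 (volume : Measure E3) (2 : ℝ≥0)) ^ 6,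
    fun v hv h2v => ?_⟩
  have h := eLpNorm_le_eLpNorm_fderiv_of_eq (volume : Measure E3) hv h2v
    (p := 2) (p' := 6) (by norm_num) (by simp) (by simp; norm_num)
  have h6 := pow_le_pow_left₀ zero_le h 6
  rw [mul_pow] at h6
  have e1 : eLpNorm v ((6 : ℝ≥0) : ℝ≥0∞) volume ^ 6 = ∫⁻ y, ‖v y‖ₑ ^ 6 := by
    have := eLpNorm_nnreal_pow_eq_lintegral (f := v) (μ := (volume : Measure E3))
      (p := 6) (by norm_num)
    simp only [NNReal.coe_ofNat, ENNReal.rpow_ofNat] at this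
    exact this
  have e2 : eLpNorm (fderiv ℝ v) ((2 : ℝ≥0) : ℝ≥0∞) volume ^ 2
      = ∫⁻ y, ‖fderiv ℝ v y‖ₑ ^ 2 := by
    have := eLpNorm_nnreal_pow_eq_lintegral (f := fderiv ℝ v) (μ := (volume : Measure E3))
      (p := 2) (by norm_num)
    simp only [NNReal.coe_ofNat, ENNReal.rpow_ofNat] at this
    exact this
  rw [e1, show (6 : ℕ) = 2 * 3 from rfl, pow_mul (eLpNorm _ _ _), e2] at h6
  exact_mod_cast h6

/-- The squared Hilbert–Schmidt norm of the gradient of `f` at `y`. -/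
def gradSq (f : E3 → E3) (y : E3) : ℝ≥0∞ :=
  ∑ j : Fin 3, (‖fderiv ℝ f y (EuclideanSpace.single j 1)‖₊ : ℝ≥0∞) ^ 2

/-- A local Sobolev inequality with a constant independent of the centre, obtained by applying
`sobolev_six` to `f` times a translate of a fixed cutoff function. -/
lemma local_sobolev :
    ∃ C : ℝ≥0, ∀ f : E3 → E3, ContDiff ℝ 1 f → ∀ x : E3,
      ∫⁻ y in ball x 1, (‖f y‖₊ : ℝ≥0∞) ^ 6 ≤
        C * (∫⁻ y in ball x 2, (gradSq f y + (‖f y‖₊ : ℝ≥0∞) ^ 2)) ^ 3 := by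
  obtain ⟨C, hC⟩ := sobolev_six
  let χ : ContDiffBump (0 : E3) := ⟨1, 3 / 2, by norm_num, by norm_num⟩
  obtain ⟨K, hK⟩ := (χ.hasCompactSupport.fderiv (𝕜 := ℝ)).exists_bound_of_continuous
    ((χ.contDiff (n := 1)).continuous_fderiv (by norm_num))
  have hK0 : 0 ≤ K := (norm_nonneg _).trans (hK 0)
  let L : ℝ≥0 := ⟨6 + 2 * K ^ 2, by positivity⟩
  refine ⟨C * L ^ 3, fun f hf x => ?_⟩
  set φ : E3 → ℝ := fun y => χ (y - x) with hφ
  have hφc : ContDiff ℝ 1 φ := χ.contDiff.comp (contDiff_id.sub contDiff_const)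
  have hφd : ∀ y, ‖fderiv ℝ φ y‖ ≤ K := fun y => by
    rw [hφ, fderiv_comp_sub]; exact hK _
  set v : E3 → E3 := fun y => φ y • f y with hv
  have hvc : ContDiff ℝ 1 v := hφc.smul hf
  have hsupp : Function.support v ⊆ closedBall x (3 / 2) := fun y hy => by
    by_contra hcon
    apply hy
    have : φ y = 0 := by
      apply χ.zero_of_le_dist
      rw [mem_closedBall, not_le, dist_eq_norm] at hcon
      simpa [χ] using hcon.le
    simp [hv, this]
  have hts : tsupport v ⊆ closedBall x (3 / 2) := closure_minimal hsupp isClosed_closedBall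
  have hvs : HasCompactSupport v :=
    HasCompactSupport.of_support_subset_isCompact (isCompact_closedBall _ _) hsupp
  have hone : ∀ y ∈ ball x 1, v y = f y := fun y hy => by
    have : φ y = 1 := by
      apply χ.one_of_mem_closedBall
      simpa [χ, dist_eq_norm] using (mem_ball.mp hy).le
    simp [hv, this]
  have hder : ∀ y, ‖fderiv ℝ v y‖ₑ ^ 2 ≤ L * (gradSq f y + (‖f y‖₊ : ℝ≥0∞) ^ 2) := fun y => by
    have h1 : ‖fderiv ℝ v y‖ ≤ ‖fderiv ℝ f y‖ + K * ‖f y‖ := by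
      rw [hv, fderiv_fun_smul (hφc.differentiable (by norm_num) y)
        (hf.differentiable (by norm_num) y)]
      refine (norm_add_le _ _).trans (add_le_add ?_ ?_)
      · rw [norm_smul]
        have : ‖φ y‖ ≤ 1 := by
          rw [Real.norm_of_nonneg χ.nonneg]; exact χ.le_one
        exact mul_le_of_le_one_left (norm_nonneg _) this
      · rw [ContinuousLinearMap.norm_smulRight_apply]
        exact mul_le_mul_of_nonneg_right (hφd y) (norm_nonneg _)
    have h2 := norm_sq_le_columns (fderiv ℝ f y)
    have h3 : ‖fderiv ℝ v y‖ ^ 2 ≤ (6 + 2 * K ^ 2) *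
        (∑ j : Fin 3, ‖fderiv ℝ f y (EuclideanSpace.single j 1)‖ ^ 2 + ‖f y‖ ^ 2) := by
      have h4 : 0 ≤ ∑ j : Fin 3, ‖fderiv ℝ f y (EuclideanSpace.single j 1)‖ ^ 2 := by positivity
      calc ‖fderiv ℝ v y‖ ^ 2 ≤ (‖fderiv ℝ f y‖ + K * ‖f y‖) ^ 2 := by gcongr
        _ ≤ 2 * (‖fderiv ℝ f y‖ ^ 2 + (K * ‖f y‖) ^ 2) := add_sq_le
        _ ≤ _ := by nlinarith [mul_nonneg (sq_nonneg K) h4, sq_nonneg ‖f y‖]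
    have h5 : ‖fderiv ℝ v y‖₊ ^ 2 ≤ L *
        (∑ j : Fin 3, ‖fderiv ℝ f y (EuclideanSpace.single j 1)‖₊ ^ 2 + ‖f y‖₊ ^ 2) := by
      rw [← NNReal.coe_le_coe]
      push_cast
      exact h3
    rw [enorm_eq_nnnorm, gradSq]
    exact_mod_cast h5
  have hint : ∫⁻ y, ‖fderiv ℝ v y‖ₑ ^ 2 ≤
      L * ∫⁻ y in ball x 2, (gradSq f y + (‖f y‖₊ : ℝ≥0∞) ^ 2) := by
    rw [← lintegral_const_mul' _ _ ENNReal.coe_ne_top]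
    rw [← setLIntegral_eq_of_support_subset (s := ball x 2)]
    · exact lintegral_mono fun y => hder y
    · intro y hy
      have : y ∈ tsupport v := by
        by_contra hcon
        apply hy
        simp [fderiv_of_notMem_tsupport (𝕜 := ℝ) hcon, enorm_eq_nnnorm]
      exact closedBall_subset_ball (by norm_num) (hts this)
  calc ∫⁻ y in ball x 1, (‖f y‖₊ : ℝ≥0∞) ^ 6 = ∫⁻ y in ball x 1, ‖v y‖ₑ ^ 6 :=
        setLIntegral_congr_fun measurableSet_ball fun y hy => by
          simp [hone y hy, enorm_eq_nnnorm]
    _ ≤ ∫⁻ y, ‖v y‖ₑ ^ 6 := setLIntegral_le_lintegral _ _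
    _ ≤ C * (∫⁻ y, ‖fderiv ℝ v y‖ₑ ^ 2) ^ 3 := hC v hvc hvs
    _ ≤ C * (L * ∫⁻ y in ball x 2, (gradSq f y + (‖f y‖₊ : ℝ≥0∞) ^ 2)) ^ 3 := by gcongr
    _ = _ := by push_cast; ring

/-- The multiplicative inequality on a single time slice, by interpolating `L³` between `L²`
and `L⁶`. -/
lemma slice_inequality :
    ∃ C : ℝ≥0, ∀ f : E3 → E3, ContDiff ℝ 1 f → ∀ x : E3,
      ∫⁻ y in ball x 1, (‖f y‖₊ : ℝ≥0∞) ^ 3 ≤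
        C * ((∫⁻ y in ball x 1, (‖f y‖₊ : ℝ≥0∞) ^ 2) ^ ((3 : ℝ) / 4) *
          (∫⁻ y in ball x 2, (gradSq f y + (‖f y‖₊ : ℝ≥0∞) ^ 2)) ^ ((3 : ℝ) / 4)) := by
  obtain ⟨C, hC⟩ := local_sobolev
  refine ⟨C ^ ((1 : ℝ) / 4), fun f hf x => ?_⟩
  have hm : AEMeasurable (fun y => (‖f y‖₊ : ℝ≥0∞) ^ ((3 : ℝ) / 2))
      (volume.restrict (ball x 1)) := by
    have := hf.continuous.measurable
    fun_prop
  have hconj : ((4 : ℝ) / 3).HolderConjugate 4 := by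
    rw [Real.holderConjugate_iff]; norm_num
  have hH := ENNReal.lintegral_mul_le_Lp_mul_Lq (volume.restrict (ball x 1)) hconj hm hm
  have e1 : ∀ y, ((‖f y‖₊ : ℝ≥0∞) ^ ((3 : ℝ) / 2)) * ((‖f y‖₊ : ℝ≥0∞) ^ ((3 : ℝ) / 2))
      = (‖f y‖₊ : ℝ≥0∞) ^ 3 := fun y => by
    rw [← ENNReal.rpow_add_of_nonneg _ _ (by norm_num) (by norm_num), ← ENNReal.rpow_natCast]
    norm_num
  have e2 : ∀ y, ((‖f y‖₊ : ℝ≥0∞) ^ ((3 : ℝ) / 2)) ^ ((4 : ℝ) / 3) = (‖f y‖₊ : ℝ≥0∞) ^ 2 :=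
    fun y => by
      rw [← ENNReal.rpow_mul, ← ENNReal.rpow_natCast]; norm_num
  have e3 : ∀ y, ((‖f y‖₊ : ℝ≥0∞) ^ ((3 : ℝ) / 2)) ^ (4 : ℝ) = (‖f y‖₊ : ℝ≥0∞) ^ 6 :=
    fun y => by
      rw [← ENNReal.rpow_mul, ← ENNReal.rpow_natCast]; norm_num
  simp only [Pi.mul_apply, e1, e2, e3] at hH
  refine hH.trans ?_
  rw [show (1 : ℝ) / (4 / 3) = 3 / 4 by norm_num]
  have h6 := ENNReal.rpow_le_rpow (hC f hf x) (show (0 : ℝ) ≤ 1 / 4 by norm_num)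
  rw [ENNReal.mul_rpow_of_nonneg _ _ (by norm_num), ← ENNReal.rpow_natCast _ 3,
    ← ENNReal.rpow_mul, ← ENNReal.coe_rpow_of_nonneg _ (by norm_num)] at h6
  rw [show ((3 : ℕ) : ℝ) * (1 / 4) = 3 / 4 by norm_num] at h6
  rw [mul_left_comm]
  gcongr

/-- A ball of radius `2` is covered by `N` unit balls, with `N` independent of its centre. -/
lemma exists_cover :
    ∃ t : Finset E3, ∀ (x : E3), ball x 2 ⊆ ⋃ z ∈ t, ball (x + z) 1 := by
  obtain ⟨t, -, hfin, ht⟩ := (isCompact_closedBall (0 : E3) 2).finite_cover_balls one_pos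
  refine ⟨hfin.toFinset, fun x y hy => ?_⟩
  have hy' : y - x ∈ closedBall (0 : E3) 2 := by
    simpa [dist_eq_norm] using (mem_ball.mp hy).le
  obtain ⟨z, hz, hyz⟩ := mem_iUnion₂.mp (ht hy')
  refine mem_iUnion₂.mpr ⟨z, by simpa using hz, ?_⟩
  rw [mem_ball, dist_eq_norm] at hyz ⊢
  rwa [← sub_sub]

lemma lintegral_ball_two_le {t : Finset E3}
    (ht : ∀ (x : E3), ball x 2 ⊆ ⋃ z ∈ t, ball (x + z) 1) (g : E3 → ℝ≥0∞) (x : E3) :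
    ∫⁻ y in ball x 2, g y ≤ ∑ z ∈ t, ∫⁻ y in ball (x + z) 1, g y := by
  have h : (volume : Measure E3).restrict (ball x 2) ≤
      ∑ z ∈ t, volume.restrict (ball (x + z) 1) := by
    refine (Measure.restrict_mono_set volume (ht x)).trans ?_
    rw [Measure.le_iff]
    intro s hs
    rw [Measure.restrict_apply hs, Measure.finsetSum_apply]
    simp only [Measure.restrict_apply hs, inter_iUnion]
    exact measure_biUnion_finset_le t _
  refine (lintegral_mono' h le_rfl).trans_eq ?_
  rw [lintegral_finsetSum_measure]

/-- Slice integrals over a ball of a function continuous on the space-time slab are measurable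
in time. -/
lemma aemeasurable_slice {S s : ℝ} (hs : s < 0) {g : E3 → ℝ → ℝ≥0∞}
    (hg : ContinuousOn (fun p : E3 × ℝ => g p.1 p.2) (univ ×ˢ Ioo (-S) 0)) (x : E3) (r : ℝ) :
    AEMeasurable (fun τ => ∫⁻ y in ball x r, g y τ) (volume.restrict (Ioc (-S) s)) := by
  have hsub : ball x r ×ˢ Ioc (-S) s ⊆ (univ : Set E3) ×ˢ Ioo (-S) 0 :=
    prod_mono (subset_univ _) fun τ hτ => ⟨hτ.1, hτ.2.trans_lt hs⟩
  have h := (hg.mono hsub).aemeasurable (μ := volume)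
    (measurableSet_ball.prod measurableSet_Ioc)
  rw [Measure.volume_eq_prod, ← Measure.prod_restrict] at h
  exact h.lintegral_prod_left'

/-- multiplicative inequality. There is a universal constant `c > 0`
such that for every `S ∈ (0,10]`, `s ∈ (−S,0)` and smooth `u : ℝ³×(−S,0) → ℝ³` for which
the quantities involved are finite,
`sup_x ∫_{−S}^s∫_{B(x,1)} |u|³ ≤ c (∫_{−S}^s α³)^{1/4} (β(s) + ∫_{−S}^s α)^{3/4}`. -/
theorem uniformly_local_L3_multiplicative_inequality :
    ∃ c : ℝ, 0 < c ∧
      ∀ (S : ℝ), 0 < S → S ≤ 10 → ∀ s ∈ Set.Ioo (-S) (0:ℝ),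
      ∀ u : E3 → ℝ → E3,
        ContDiffOn ℝ (⊤ : ℕ∞) (fun p : E3 × ℝ => u p.1 p.2) (Set.univ ×ˢ Set.Ioo (-S) 0) →
        (∫⁻ τ in Set.Ioc (-S) s, alphaUnif u τ ^ (3:ℕ)) < ⊤ →
        betaUnif u S s < ⊤ →
        (⨆ x : E3, ∫⁻ τ in Set.Ioc (-S) s, ∫⁻ y in ball x 1, (‖u y τ‖₊ : ℝ≥0∞) ^ 3)
          ≤ ENNReal.ofReal c *
            (∫⁻ τ in Set.Ioc (-S) s, alphaUnif u τ ^ (3:ℕ)) ^ ((1:ℝ)/4) *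
            (betaUnif u S s + ∫⁻ τ in Set.Ioc (-S) s, alphaUnif u τ) ^ ((3:ℝ)/4) := by
  obtain ⟨C, hC⟩ := slice_inequality
  obtain ⟨t, ht⟩ := exists_cover
  let c : ℝ≥0 := C * (t.card : ℝ≥0) ^ ((3 : ℝ) / 4) + 1
  refine ⟨c, by positivity, fun S hS _ s hs u hu _ _ => iSup_le fun x => ?_⟩
  rw [ENNReal.ofReal_coe_nnreal]
  set μ := (volume : Measure ℝ).restrict (Ioc (-S) s) with hμ
  have hopen : IsOpen ((univ : Set E3) ×ˢ Ioo (-S) 0) := isOpen_univ.prod isOpen_Ioo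
  have hmem : ∀ τ ∈ Ioc (-S) s, τ ∈ Ioo (-S) 0 := fun τ hτ => ⟨hτ.1, hτ.2.trans_lt hs.2⟩
  have hslice : ∀ τ ∈ Ioc (-S) s, ContDiff ℝ 1 (fun y => u y τ) := fun τ hτ => by
    rw [← contDiffOn_univ]
    exact (hu.of_le (by exact_mod_cast le_top)).comp
      (f := fun y : E3 => (y, τ)) (contDiff_id.prodMk contDiff_const).contDiffOn
      fun y _ => ⟨mem_univ _, hmem τ hτ⟩
  have huc : ContinuousOn (fun p : E3 × ℝ => (‖u p.1 p.2‖₊ : ℝ≥0∞) ^ 2)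
      (univ ×ˢ Ioo (-S) 0) :=
    (ENNReal.continuous_pow 2).comp_continuousOn
      (ENNReal.continuous_coe.comp_continuousOn hu.continuousOn.nnnorm)
  -- The spatial gradient is the joint derivative restricted to spatial directions.
  have hgc : ContinuousOn (fun p : E3 × ℝ => gradSq (fun y => u y p.2) p.1)
      (univ ×ˢ Ioo (-S) 0) := by
    have hD := hu.continuousOn_fderiv_of_isOpen hopen (by norm_num)
    have hG : ContinuousOn (fun p : E3 × ℝ => ∑ j : Fin 3,
        (‖fderiv ℝ (fun q : E3 × ℝ => u q.1 q.2) p (EuclideanSpace.single j 1, 0)‖₊ : ℝ≥0∞) ^ 2)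
        (univ ×ˢ Ioo (-S) 0) :=
      continuousOn_finsetSum _ fun j _ => (ENNReal.continuous_pow 2).comp_continuousOn
        (ENNReal.continuous_coe.comp_continuousOn
          (hD.clm_apply continuousOn_const).nnnorm)
    refine hG.congr fun p hp => ?_
    have hd : HasFDerivAt (fun q : E3 × ℝ => u q.1 q.2)
        (fderiv ℝ (fun q : E3 × ℝ => u q.1 q.2) p) p :=
      ((hu.contDiffAt (hopen.mem_nhds hp)).differentiableAt (by simp)).hasFDerivAt
    have hi : HasFDerivAt (fun y : E3 => (y, p.2)) (ContinuousLinearMap.inl ℝ E3 ℝ) p.1 :=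
      hasFDerivAt_prodMk_left _ _
    have hcomp := HasFDerivAt.comp (g := fun q : E3 × ℝ => u q.1 q.2) p.1 hd hi
    have hfd : fderiv ℝ (fun y => u y p.2) p.1 = _ := hcomp.fderiv
    simp only [gradSq, hfd]
    simp
  set a : ℝ → ℝ≥0∞ := fun τ => ∫⁻ y in ball x 1, (‖u y τ‖₊ : ℝ≥0∞) ^ 2 with ha
  set b : ℝ → ℝ≥0∞ := fun τ => ∫⁻ y in ball x 2,
    (gradSq (fun z => u z τ) y + (‖u y τ‖₊ : ℝ≥0∞) ^ 2) with hb
  have hsum : ContinuousOn (fun p : E3 × ℝ => gradSq (fun y => u y p.2) p.1 +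
      (‖u p.1 p.2‖₊ : ℝ≥0∞) ^ 2) (univ ×ˢ Ioo (-S) 0) := hgc.add huc
  have ham : AEMeasurable a μ := aemeasurable_slice hs.2
    (g := fun y τ => (‖u y τ‖₊ : ℝ≥0∞) ^ 2) huc x 1
  have hbm : AEMeasurable b μ := aemeasurable_slice hs.2
    (g := fun y τ => gradSq (fun z => u z τ) y + (‖u y τ‖₊ : ℝ≥0∞) ^ 2) hsum x 2
  have hle1 : ∫⁻ τ, a τ ^ 3 ∂μ ≤ ∫⁻ τ, alphaUnif u τ ^ 3 ∂μ :=
    lintegral_mono fun τ => pow_le_pow_left₀ zero_le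
      (le_iSup (fun x : E3 => ∫⁻ y in ball x 1, (‖u y τ‖₊ : ℝ≥0∞) ^ 2) x) 3
  have hle2 : ∫⁻ τ, b τ ∂μ ≤ t.card * (betaUnif u S s + ∫⁻ τ, alphaUnif u τ ∂μ) := by
    calc ∫⁻ τ, b τ ∂μ ≤ ∫⁻ τ, (∑ z ∈ t, ∫⁻ y in ball (x + z) 1,
          (gradSq (fun z => u z τ) y + (‖u y τ‖₊ : ℝ≥0∞) ^ 2)) ∂μ :=
          lintegral_mono fun τ => lintegral_ball_two_le ht _ x
      _ = ∑ z ∈ t, ∫⁻ τ, (∫⁻ y in ball (x + z) 1,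
          (gradSq (fun z => u z τ) y + (‖u y τ‖₊ : ℝ≥0∞) ^ 2)) ∂μ :=
          lintegral_finsetSum' _ fun z _ => aemeasurable_slice hs.2
            (g := fun y τ => gradSq (fun z => u z τ) y + (‖u y τ‖₊ : ℝ≥0∞) ^ 2) hsum _ _
      _ ≤ ∑ z ∈ t, (betaUnif u S s + ∫⁻ τ, alphaUnif u τ ∂μ) := by
          refine Finset.sum_le_sum fun z _ => ?_
          have hsplit : ∫⁻ τ, (∫⁻ y in ball (x + z) 1,
              (gradSq (fun z => u z τ) y + (‖u y τ‖₊ : ℝ≥0∞) ^ 2)) ∂μ =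
              ∫⁻ τ, ((∫⁻ y in ball (x + z) 1, gradSq (fun z => u z τ) y) +
                ∫⁻ y in ball (x + z) 1, (‖u y τ‖₊ : ℝ≥0∞) ^ 2) ∂μ := by
            refine setLIntegral_congr_fun measurableSet_Ioc fun τ hτ => ?_
            refine lintegral_add_right' _ ?_
            have := (hslice τ hτ).continuous.measurable
            fun_prop
          rw [hsplit, lintegral_add_right' _ (aemeasurable_slice hs.2
            (g := fun y τ => (‖u y τ‖₊ : ℝ≥0∞) ^ 2) huc _ _)]
          refine add_le_add ?_ (lintegral_mono fun τ => ?_)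
          · exact le_iSup (fun x : E3 => ∫⁻ τ in Set.Ioc (-S) s, ∫⁻ y in ball x 1,
              ∑ j : Fin 3, (‖fderiv ℝ (fun z => u z τ) y
                (EuclideanSpace.single j 1)‖₊ : ℝ≥0∞) ^ 2) (x + z)
          · exact le_iSup (fun x : E3 => ∫⁻ y in ball x 1, (‖u y τ‖₊ : ℝ≥0∞) ^ 2) (x + z)
      _ = _ := by rw [Finset.sum_const, nsmul_eq_mul]
  have hconj : (4 : ℝ).HolderConjugate (4 / 3) := by
    rw [Real.holderConjugate_iff]; norm_num
  have hH := ENNReal.lintegral_mul_le_Lp_mul_Lq μ hconj (ham.pow_const ((3 : ℝ) / 4))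
    (hbm.pow_const ((3 : ℝ) / 4))
  have e1 : ∀ τ, (a τ ^ ((3 : ℝ) / 4)) ^ (4 : ℝ) = a τ ^ 3 := fun τ => by
    rw [← ENNReal.rpow_mul, ← ENNReal.rpow_natCast]; norm_num
  have e2 : ∀ τ, (b τ ^ ((3 : ℝ) / 4)) ^ ((4 : ℝ) / 3) = b τ := fun τ => by
    rw [← ENNReal.rpow_mul]; norm_num
  simp only [Pi.mul_apply, e1, e2] at hH
  rw [show (1 : ℝ) / (4 / 3) = 3 / 4 by norm_num] at hH
  calc ∫⁻ τ, (∫⁻ y in ball x 1, (‖u y τ‖₊ : ℝ≥0∞) ^ 3) ∂μ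
      ≤ ∫⁻ τ, C * (a τ ^ ((3 : ℝ) / 4) * b τ ^ ((3 : ℝ) / 4)) ∂μ :=
        setLIntegral_mono' measurableSet_Ioc fun τ hτ => hC _ (hslice τ hτ) x
    _ = C * ∫⁻ τ, a τ ^ ((3 : ℝ) / 4) * b τ ^ ((3 : ℝ) / 4) ∂μ :=
        lintegral_const_mul' _ _ ENNReal.coe_ne_top
    _ ≤ C * ((∫⁻ τ, alphaUnif u τ ^ 3 ∂μ) ^ ((1 : ℝ) / 4) *
        (t.card * (betaUnif u S s + ∫⁻ τ, alphaUnif u τ ∂μ)) ^ ((3 : ℝ) / 4)) := by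
        refine mul_le_mul_right (hH.trans ?_) _
        gcongr
    _ = (C * (t.card : ℝ≥0) ^ ((3 : ℝ) / 4) : ℝ≥0) *
        (∫⁻ τ, alphaUnif u τ ^ 3 ∂μ) ^ ((1 : ℝ) / 4) *
        (betaUnif u S s + ∫⁻ τ, alphaUnif u τ ∂μ) ^ ((3 : ℝ) / 4) := by
        rw [ENNReal.mul_rpow_of_nonneg _ _ (by norm_num), ENNReal.coe_mul,
          ENNReal.coe_rpow_of_nonneg _ (by norm_num), ENNReal.coe_natCast]
        ring
    _ ≤ _ := by
        gcongr
        exact le_self_add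
end
end
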